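/- arXiv:2109.08217 — 6 statements merged into one kernel-verified Lean document; each statement's English description precedes it below -/
import Mathlib

section
/- For every real number θ, ∫_0^θ log|2 sin t| dt = −(1/2) ∑_{n=1}^∞ sin(2nθ)/n^2. -/
open Real MeasureTheory

/-!
On the open unit disc `-log (1 - z) = ∑ zⁿ / n`, so `α ↦ Im Li₂(r e^{iα})` is a primitive of
`α ↦ -log |1 - r e^{iα}|` for `|r| < 1`. Letting `r → 1⁻`, the primitives converge because `Li₂` is
continuous on the closed disc, and the integrals converge by dominated convergence, since
`|1 - z| ≤ 2 |1 - r z|` keeps the logarithmic singularity at `z = 1` under control uniformly in `r`.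
Finally `|2 sin t| = |1 - e^{2it}|`.
-/

open Filter Set Topology

section Dilogarithm

/-- The dilogarithm `Li₂ z = ∑_{n ≥ 1} zⁿ / n²`, meaningful on the closed unit disc. The series is
indexed from `n = 0`, where the junk value `1 / 0 = 0` makes the term vanish. -/
noncomputable def dilog (z : ℂ) : ℂ := ∑' n : ℕ, z ^ n / (n : ℂ) ^ 2

variable {z : ℂ} {R : ℝ}

lemma norm_pow_div_sq_le (hz : ‖z‖ ≤ 1) (n : ℕ) : ‖z ^ n / (n : ℂ) ^ 2‖ ≤ 1 / (n : ℝ) ^ 2 := by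
  rw [norm_div, norm_pow, norm_pow, Complex.norm_natCast]
  gcongr
  exact pow_le_one₀ (norm_nonneg z) hz

lemma summable_pow_div_sq (hz : ‖z‖ ≤ 1) : Summable fun n : ℕ ↦ z ^ n / (n : ℂ) ^ 2 :=
  .of_norm_bounded (Real.summable_one_div_nat_pow.mpr one_lt_two) (norm_pow_div_sq_le hz)

lemma continuousOn_dilog : ContinuousOn dilog (Metric.closedBall 0 1) :=
  continuousOn_tsum (fun n ↦ by fun_prop) (Real.summable_one_div_nat_pow.mpr one_lt_two)
    fun n _ hz ↦ norm_pow_div_sq_le (mem_closedBall_zero_iff.mp hz) n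

lemma hasDerivAt_circleMap_pow_div_sq (R α : ℝ) (n : ℕ) :
    HasDerivAt (fun β ↦ circleMap 0 R β ^ n / (n : ℂ) ^ 2)
      (Complex.I * (circleMap 0 R α ^ n / n)) α := by
  rcases n with _ | n
  · simpa using hasDerivAt_const α (0 : ℂ)
  · refine (((hasDerivAt_circleMap 0 R α).pow (n + 1)).div_const _).congr_deriv ?_
    have : ((n + 1 : ℕ) : ℂ) ≠ 0 := Nat.cast_ne_zero.mpr n.succ_ne_zero
    field_simp
    simp [pow_succ]

lemma hasDerivAt_dilog_circleMap (hR : |R| < 1) (α : ℝ) :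
    HasDerivAt (fun β ↦ dilog (circleMap 0 R β))
      (-Complex.I * Complex.log (1 - circleMap 0 R α)) α := by
  have hnorm (β : ℝ) : ‖circleMap 0 R β‖ = |R| := norm_circleMap_zero R β
  have hbound (n : ℕ) (β : ℝ) : ‖Complex.I * (circleMap 0 R β ^ n / n)‖ ≤ |R| ^ n := by
    rw [norm_mul, Complex.norm_I, one_mul, norm_div, norm_pow, hnorm, Complex.norm_natCast]
    rcases n.eq_zero_or_pos with rfl | hn
    · simp
    · exact div_le_self (by positivity) (Nat.one_le_cast.mpr hn)
  have hderiv := hasDerivAt_tsum (summable_geometric_of_lt_one (abs_nonneg R) hR)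
    (fun n β ↦ hasDerivAt_circleMap_pow_div_sq R β n) hbound
    (summable_pow_div_sq ((hnorm α).trans_lt hR).le) α
  have hlog := (Complex.hasSum_taylorSeries_neg_log ((hnorm α).trans_lt hR)).mul_left Complex.I
  refine hderiv.congr_deriv (hlog.tsum_eq.trans ?_)
  ring

lemma hasDerivAt_im_dilog_circleMap (hR : |R| < 1) (α : ℝ) :
    HasDerivAt (fun β ↦ (dilog (circleMap 0 R β)).im) (-log ‖1 - circleMap 0 R α‖) α := by
  have h := Complex.imCLM.hasFDerivAt.comp_hasDerivAt α (hasDerivAt_dilog_circleMap hR α)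
  exact h.congr_deriv (by simp [Complex.log_re])

lemma im_dilog_circleMap (hR : |R| ≤ 1) (α : ℝ) :
    (dilog (circleMap 0 R α)).im
      = ∑' n : ℕ, R ^ (n + 1) * sin ((n + 1) * α) / ((n : ℝ) + 1) ^ 2 := by
  have hsum := summable_pow_div_sq (z := circleMap 0 R α) (by simpa using hR)
  have hterm (n : ℕ) :
      (circleMap 0 R α ^ n / (n : ℂ) ^ 2).im = R ^ n * sin (n * α) / (n : ℝ) ^ 2 := by
    rw [circleMap_zero_pow, ← Nat.cast_pow, Complex.div_natCast_im, circleMap_zero_im, Nat.cast_pow]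
  rw [dilog, hsum.tsum_eq_zero_add, Complex.add_im,
    Complex.im_tsum ((summable_nat_add_iff 1).mpr hsum)]
  simp only [hterm]
  simp

end Dilogarithm

lemma norm_sub_le_two_mul_norm_sub_smul {E : Type*} [SeminormedAddCommGroup E] [NormedSpace ℝ E]
    {x y : E} {r : ℝ} (hyx : ‖y‖ ≤ ‖x‖) (hr₀ : 0 ≤ r) (hr₁ : r ≤ 1) :
    ‖x - y‖ ≤ 2 * ‖x - r • y‖ := by
  have hry : ‖r • y‖ = r * ‖y‖ := norm_smul_of_nonneg hr₀ y
  have hdiff : ‖r • y - y‖ = (1 - r) * ‖y‖ := by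
    rw [← norm_smul_of_nonneg (sub_nonneg.mpr hr₁), norm_sub_rev, sub_smul, one_smul]
  have hgap : (1 - r) * ‖y‖ ≤ ‖x - r • y‖ := by
    linarith [norm_sub_norm_le x (r • y)]
  linarith [norm_sub_le_norm_sub_add_norm_sub x (r • y) y]

lemma abs_log_norm_sub_smul_le {E : Type*} [NormedAddCommGroup E] [NormedSpace ℝ E]
    {x y : E} {r : ℝ} (hx : ‖x‖ ≤ 1) (hyx : ‖y‖ ≤ ‖x‖) (hxy : x ≠ y) (hr₀ : 0 ≤ r) (hr₁ : r ≤ 1) :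
    |log ‖x - r • y‖| ≤ log 2 + |log ‖x - y‖| := by
  have hpos : 0 < ‖x - y‖ := norm_sub_pos_iff.mpr hxy
  have hlower : ‖x - y‖ ≤ 2 * ‖x - r • y‖ := norm_sub_le_two_mul_norm_sub_smul hyx hr₀ hr₁
  have hpos_smul : 0 < ‖x - r • y‖ := by linarith
  have hupper : ‖x - r • y‖ ≤ 2 := by
    have hry : ‖r • y‖ ≤ ‖y‖ := by
      simpa [norm_smul_of_nonneg hr₀] using mul_le_of_le_one_left (norm_nonneg y) hr₁
    linarith [norm_sub_le x (r • y)]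
  have hlog_lower : log ‖x - y‖ ≤ log 2 + log ‖x - r • y‖ := by
    rw [← log_mul two_ne_zero hpos_smul.ne']
    exact log_le_log hpos hlower
  have hlog_upper : log ‖x - r • y‖ ≤ log 2 := log_le_log hpos_smul hupper
  rw [abs_le]
  constructor <;> linarith [neg_abs_le (log ‖x - y‖), abs_nonneg (log ‖x - y‖)]

section CircleIntegral

variable {R : ℝ}

lemma intervalIntegrable_log_norm_one_sub_circleMap (R a b : ℝ) :
    IntervalIntegrable (fun α ↦ log ‖1 - circleMap 0 R α‖) volume a b := by
  have hperiodic : Function.Periodic (fun α ↦ log ‖1 - circleMap 0 R α‖) (2 * π) := fun α ↦ by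
    simp only [periodic_circleMap 0 R α]
  refine hperiodic.intervalIntegrable₀ two_pi_pos.ne' ?_ a b
  simpa only [CircleIntegrable, norm_sub_rev] using
    circleIntegrable_log_norm_sub_const (a := 1) (c := 0) R

lemma ae_circleMap_ne (c : ℂ) (hR : R ≠ 0) (w : ℂ) : ∀ᵐ α : ℝ, circleMap c R α ≠ w :=
  ((countable_singleton w).preimage_circleMap c hR).ae_notMem volume

lemma circleMap_zero_mul_eq_smul (r R α : ℝ) : circleMap 0 (r * R) α = r • circleMap 0 R α := by
  simp [circleMap, mul_assoc]

lemma integral_log_norm_one_sub_circleMap_of_abs_lt_one (hR : |R| < 1) (a b : ℝ) :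
    ∫ α in a..b, log ‖1 - circleMap 0 R α‖
      = (dilog (circleMap 0 R a)).im - (dilog (circleMap 0 R b)).im := by
  have h := intervalIntegral.integral_eq_sub_of_hasDerivAt
    (fun α _ ↦ hasDerivAt_im_dilog_circleMap hR α)
    (intervalIntegrable_log_norm_one_sub_circleMap R a b).neg
  rw [intervalIntegral.integral_neg] at h
  linarith

lemma tendsto_integral_log_norm_one_sub_circleMap (hR : |R| ≤ 1) (a b : ℝ) :
    Tendsto (fun r : ℝ ↦ ∫ α in a..b, log ‖1 - circleMap 0 (r * R) α‖) (𝓝[<] 1)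
      (𝓝 (∫ α in a..b, log ‖1 - circleMap 0 R α‖)) := by
  have hne : ∀ᵐ α : ℝ, circleMap 0 R α ≠ 1 := by
    rcases eq_or_ne R 0 with rfl | hR₀
    · simp
    · exact ae_circleMap_ne 0 hR₀ 1
  simp only [circleMap_zero_mul_eq_smul]
  refine intervalIntegral.tendsto_integral_filter_of_dominated_convergence
    (fun α ↦ log 2 + |log ‖1 - circleMap 0 R α‖|) ?_ ?_ ?_ ?_
  · refine .of_forall fun r ↦ Measurable.aestronglyMeasurable ?_
    fun_prop
  · filter_upwards [Ioo_mem_nhdsLT one_pos] with r hr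
    filter_upwards [hne] with α hα _
    exact abs_log_norm_sub_smul_le norm_one.le (by simpa using hR) hα.symm hr.1.le hr.2.le
  · exact intervalIntegrable_const.add (intervalIntegrable_log_norm_one_sub_circleMap R a b).abs
  · filter_upwards [hne] with α hα _
    have hcont : ContinuousAt (fun r : ℝ ↦ log ‖1 - r • circleMap 0 R α‖) 1 :=
      ContinuousAt.log (by fun_prop) (by simpa [sub_eq_zero] using hα.symm)
    simpa using hcont.tendsto.mono_left nhdsWithin_le_nhds

lemma tendsto_dilog_circleMap_mul (hR : |R| ≤ 1) (α : ℝ) :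
    Tendsto (fun r : ℝ ↦ dilog (circleMap 0 (r * R) α)) (𝓝[<] 1)
      (𝓝 (dilog (circleMap 0 R α))) := by
  have hdilog : ContinuousWithinAt dilog (Metric.closedBall 0 1) (circleMap 0 R α) :=
    continuousOn_dilog _ (by simpa using hR)
  refine hdilog.tendsto.comp (tendsto_nhdsWithin_iff.mpr ⟨?_, ?_⟩)
  · have hcont : ContinuousAt (fun r : ℝ ↦ r • circleMap 0 R α) 1 := by fun_prop
    simpa only [circleMap_zero_mul_eq_smul, one_smul] using
      hcont.tendsto.mono_left nhdsWithin_le_nhds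
  · filter_upwards [Ioo_mem_nhdsLT one_pos] with r hr
    simpa [abs_of_pos hr.1] using mul_le_one₀ hr.2.le (abs_nonneg R) hR

theorem integral_log_norm_one_sub_circleMap (hR : |R| ≤ 1) (a b : ℝ) :
    ∫ α in a..b, log ‖1 - circleMap 0 R α‖
      = (dilog (circleMap 0 R a)).im - (dilog (circleMap 0 R b)).im := by
  have him (α : ℝ) : Tendsto (fun r : ℝ ↦ (dilog (circleMap 0 (r * R) α)).im) (𝓝[<] 1)
      (𝓝 (dilog (circleMap 0 R α)).im) :=
    (Complex.continuous_im.tendsto _).comp (tendsto_dilog_circleMap_mul hR α)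
  refine tendsto_nhds_unique_of_eventuallyEq
    (tendsto_integral_log_norm_one_sub_circleMap hR a b) ((him a).sub (him b)) ?_
  filter_upwards [Ioo_mem_nhdsLT one_pos] with r hr
  refine integral_log_norm_one_sub_circleMap_of_abs_lt_one ?_ a b
  rw [abs_mul, abs_of_pos hr.1]
  exact mul_lt_one_of_nonneg_of_lt_one_left hr.1.le hr.2 hR

lemma abs_two_mul_sin_eq_norm_one_sub_circleMap (t : ℝ) :
    |2 * sin t| = ‖1 - circleMap 0 1 (2 * t)‖ := by
  have h := Complex.norm_exp_I_mul_ofReal_sub_one (2 * t)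
  rw [mul_div_cancel_left₀ t two_ne_zero, Real.norm_eq_abs] at h
  rw [← h, norm_sub_rev, circleMap_zero, mul_comm Complex.I, Complex.ofReal_one, one_mul]

end CircleIntegral

/-- For every real `θ`, `∫_0^θ log|2 sin t| dt = −(1/2) ∑_{n=1}^∞ sin(2nθ)/n²`. -/
theorem integral_log_two_sin (θ : ℝ) :
    ∫ t in (0:ℝ)..θ, Real.log |2 * Real.sin t|
      = -(1 / 2) * ∑' n : ℕ, Real.sin (2 * (n + 1) * θ) / ((n : ℝ) + 1) ^ 2 := by
  calc ∫ t in (0:ℝ)..θ, log |2 * sin t|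
      = ∫ t in (0:ℝ)..θ, log ‖1 - circleMap 0 1 (2 * t)‖ := by
        simp only [abs_two_mul_sin_eq_norm_one_sub_circleMap]
    _ = 1 / 2 * ∫ α in (0:ℝ)..2 * θ, log ‖1 - circleMap 0 1 α‖ := by
        rw [intervalIntegral.integral_comp_mul_left (fun α ↦ log ‖1 - circleMap 0 1 α‖)
          two_ne_zero, mul_zero, smul_eq_mul, one_div]
    _ = -(1 / 2) * (dilog (circleMap 0 1 (2 * θ))).im := by
        have him_zero : (dilog (circleMap 0 1 0)).im = 0 := by
          simp [im_dilog_circleMap abs_one.le]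
        rw [integral_log_norm_one_sub_circleMap abs_one.le, him_zero]
        ring
    _ = -(1 / 2) * ∑' n : ℕ, sin (2 * (n + 1) * θ) / ((n : ℝ) + 1) ^ 2 := by
        simp only [im_dilog_circleMap abs_one.le, one_pow, one_mul, mul_left_comm, mul_assoc]
end

section
/- Let a, b, c be nonzero complex numbers with c·a = b^2 + 1. Then a/b + b/a + 1/(ab) = b/c + c/b + 1/(bc). In other words, K(x_1,x_2) = x_1/x_2 + x_2/x_1 + 1/(x_1 x_2) is a conserved quantity of the map (x_1, x_2) ↦ (x_2, (x_2^2+1)/x_1). -/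
-- The right-hand side and the relation `c * a = b ^ 2 + d` are symmetric in `a` and `c`, so the
-- left-hand side takes the same value at `(a, b)` and at `(c, b)`.
theorem div_add_div_add_div_mul_eq_add_div {F : Type*} [Field F] {a b c d : F}
    (ha : a ≠ 0) (hb : b ≠ 0) (h : c * a = b ^ 2 + d) :
    a / b + b / a + d / (a * b) = (a + c) / b :=
  calc a / b + b / a + d / (a * b) = (a ^ 2 + (b ^ 2 + d)) / (a * b) := by field_simp; ring
    _ = a * (a + c) / (a * b) := by rw [← h]; ring
    _ = (a + c) / b := mul_div_mul_left _ _ ha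

theorem conserved_quantity_r2_general {F : Type*} [Field F] {a b c d : F}
    (ha : a ≠ 0) (hb : b ≠ 0) (hc : c ≠ 0) (h : c * a = b ^ 2 + d) :
    a / b + b / a + d / (a * b) = b / c + c / b + d / (b * c) := by
  have h_reversed : a * c = b ^ 2 + d := by rw [mul_comm, h]
  calc a / b + b / a + d / (a * b) = (a + c) / b := div_add_div_add_div_mul_eq_add_div ha hb h
    _ = (c + a) / b := by rw [add_comm]
    _ = c / b + b / c + d / (c * b) :=
      (div_add_div_add_div_mul_eq_add_div hc hb h_reversed).symm
    _ = b / c + c / b + d / (b * c) := by rw [add_comm (c / b), mul_comm c]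

/-- `K(x₁,x₂) = x₁/x₂ + x₂/x₁ + 1/(x₁x₂)` is a conserved quantity of the map
`(x₁, x₂) ↦ (x₂, (x₂²+1)/x₁)`: if `c·a = b² + 1` then
`a/b + b/a + 1/(ab) = b/c + c/b + 1/(bc)`. -/
theorem conserved_quantity_r2 (a b c : ℂ) (ha : a ≠ 0) (hb : b ≠ 0) (hc : c ≠ 0)
    (h : c * a = b ^ 2 + 1) :
    a / b + b / a + 1 / (a * b) = b / c + c / b + 1 / (b * c) :=
  conserved_quantity_r2_general ha hb hc h
end

section
/- Let a, b, c be nonzero complex numbers with c·a = b^2 + 1, and set K = a/b + b/a + 1/(ab). Then c − K·b + a = 0. Consequently, any solution (x_n) with nonzero terms of the recurrence x_{n+2} x_n = x_{n+1}^2 + 1 satisfies the linear relation x_{n+2} − K x_{n+1} + x_n = 0, where K = x_1/x_2 + x_2/x_1 + 1/(x_1 x_2) is the conserved quantity. -/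
/-!
Multiplying `K(a, b) = a / b + b / a + d / (a * b)` by `b` and eliminating `b ^ 2 + d` with the
exchange relation `c * a = b ^ 2 + d` gives `K(a, b) * b = c + a`. The exchange relation and
`c + a` are symmetric in `a` and `c`, and `K` is symmetric in its arguments, so
`K(b, c) * b = K(a, b) * b`. Hence `K` is constant along an orbit, and `K(a, b) * b = c + a`
becomes a linear recurrence with constant coefficients.
-/

section Semifield

variable {F : Type*} [Semifield F] {a b c d : F}

/-- The conserved quantity of the rank-2 exchange recurrence `x (n + 2) * x n = x (n + 1) ^ 2 + d`,
as a function of two consecutive terms; `d = 1` is the coefficient-free cluster algebra. -/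
def exchangeInvariant (d a b : F) : F :=
  a / b + b / a + d / (a * b)

theorem exchangeInvariant_comm (d a b : F) :
    exchangeInvariant d a b = exchangeInvariant d b a := by
  simp only [exchangeInvariant, add_comm (a / b), mul_comm a b]

theorem exchangeInvariant_mul_right (ha : a ≠ 0) (hb : b ≠ 0) (h : c * a = b ^ 2 + d) :
    exchangeInvariant d a b * b = c + a := by
  refine mul_right_cancel₀ ha ?_
  calc exchangeInvariant d a b * b * a = b ^ 2 + d + a * a := by
        unfold exchangeInvariant
        field_simp
        ring
    _ = (c + a) * a := by rw [← h, add_mul]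

theorem exchangeInvariant_eq_of_mul_eq (ha : a ≠ 0) (hb : b ≠ 0) (hc : c ≠ 0)
    (h : c * a = b ^ 2 + d) : exchangeInvariant d b c = exchangeInvariant d a b := by
  refine mul_right_cancel₀ hb ?_
  calc exchangeInvariant d b c * b = exchangeInvariant d c b * b := by
        rw [exchangeInvariant_comm]
    _ = a + c := exchangeInvariant_mul_right hc hb (mul_comm a c ▸ h)
    _ = c + a := add_comm a c
    _ = exchangeInvariant d a b * b := (exchangeInvariant_mul_right ha hb h).symm

theorem exchangeInvariant_orbit_eq {x : ℕ → F} (hx : ∀ n, x n ≠ 0)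
    (hrec : ∀ n, x (n + 2) * x n = x (n + 1) ^ 2 + d) (n : ℕ) :
    exchangeInvariant d (x n) (x (n + 1)) = exchangeInvariant d (x 0) (x 1) := by
  induction n with
  | zero => rfl
  | succ n ih =>
    exact (exchangeInvariant_eq_of_mul_eq (hx n) (hx (n + 1)) (hx (n + 2)) (hrec n)).trans ih

end Semifield

theorem sub_exchangeInvariant_mul_add {F : Type*} [Field F] {a b c d : F} (ha : a ≠ 0)
    (hb : b ≠ 0) (h : c * a = b ^ 2 + d) : c - exchangeInvariant d a b * b + a = 0 := by
  rw [exchangeInvariant_mul_right ha hb h]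
  ring

theorem linearisation_r2_general {F : Type*} [Field F] {a b c d : F} (ha : a ≠ 0) (hb : b ≠ 0)
    (h : c * a = b ^ 2 + d) :
    c - exchangeInvariant d a b * b + a = 0 ∧
      ∀ x : ℕ → F, (∀ n, x n ≠ 0) → (∀ n, x (n + 2) * x n = x (n + 1) ^ 2 + d) →
        ∀ n, x (n + 2) - exchangeInvariant d (x 1) (x 2) * x (n + 1) + x n = 0 := by
  refine ⟨sub_exchangeInvariant_mul_add ha hb h, fun x hx hrec n => ?_⟩
  have conserved : exchangeInvariant d (x 1) (x 2) = exchangeInvariant d (x n) (x (n + 1)) :=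
    (exchangeInvariant_orbit_eq hx hrec 1).trans (exchangeInvariant_orbit_eq hx hrec n).symm
  rw [conserved]
  exact sub_exchangeInvariant_mul_add (hx n) (hx (n + 1)) (hrec n)

/-- If `c·a = b² + 1` and `K = a/b + b/a + 1/(ab)`, then `c − K·b + a = 0`.
Consequently, any solution with nonzero terms of the recurrence `x_{n+2} x_n = x_{n+1}² + 1`
satisfies the linear relation `x_{n+2} − K x_{n+1} + x_n = 0`, where `K` is the conserved
quantity evaluated at the initial data. -/
theorem linearisation_r2 (a b c : ℂ) (ha : a ≠ 0) (hb : b ≠ 0) (hc : c ≠ 0)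
    (h : c * a = b ^ 2 + 1) :
    (c - (a / b + b / a + 1 / (a * b)) * b + a = 0) ∧
      ∀ x : ℕ → ℂ, (∀ n, x n ≠ 0) → (∀ n, x (n + 2) * x n = x (n + 1) ^ 2 + 1) →
        ∀ n, x (n + 2) - (x 1 / x 2 + x 2 / x 1 + 1 / (x 1 * x 2)) * x (n + 1) + x n = 0 :=
  linearisation_r2_general ha hb h
end

section
/- Let (x_n) be a sequence of nonzero complex numbers satisfying the Somos-4 recurrence x_{n+4} x_n = x_{n+3} x_{n+1} + x_{n+2}^2 for all n, and define y_n = x_{n+2} x_n / x_{n+1}^2. Then y_{n+2} = (y_{n+1} + 1)/(y_n y_{n+1}^2) for all n. -/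
/-!
In `y_{n+2} y_n y_{n+1}²` the factors `x_{n+1}` and `x_{n+3}` cancel, leaving
`x_{n+4} x_n / x_{n+2}²`. Dividing the recurrence by `x_{n+2}²` therefore expresses this product
through `y_{n+1} = x_{n+3} x_{n+1} / x_{n+2}²` alone.
-/

section SecondRatio

variable {G : Type*} [CommGroupWithZero G] {x : ℕ → G}

/-- The ratio of consecutive ratios `(x_{n+2} / x_{n+1}) / (x_{n+1} / x_n)`: the variable `y_n` of
the QRT reduction. The index `n` is the lowest of the three indices involved. -/
def secondRatio (x : ℕ → G) (n : ℕ) : G :=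
  x (n + 2) * x n / x (n + 1) ^ 2

theorem secondRatio_ne_zero (hx : ∀ n, x n ≠ 0) (n : ℕ) : secondRatio x n ≠ 0 :=
  div_ne_zero (mul_ne_zero (hx _) (hx _)) (pow_ne_zero 2 (hx _))

theorem secondRatio_add_two_mul (hx : ∀ n, x n ≠ 0) (n : ℕ) :
    secondRatio x (n + 2) * (secondRatio x n * secondRatio x (n + 1) ^ 2) =
      x (n + 4) * x n / x (n + 2) ^ 2 := by
  have h₁ := hx (n + 1)
  have h₂ := hx (n + 2)
  have h₃ := hx (n + 3)
  simp only [secondRatio, add_assoc, Nat.reduceAdd]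
  field_simp

end SecondRatio

theorem somos4_qrt_reduction_general {K : Type*} [Semifield K] {α β : K} {x : ℕ → K}
    (hx : ∀ n, x n ≠ 0)
    (hrec : ∀ n, x (n + 4) * x n = α * (x (n + 3) * x (n + 1)) + β * x (n + 2) ^ 2) (n : ℕ) :
    secondRatio x (n + 2) =
      (α * secondRatio x (n + 1) + β) / (secondRatio x n * secondRatio x (n + 1) ^ 2) := by
  have hden : secondRatio x n * secondRatio x (n + 1) ^ 2 ≠ 0 :=
    mul_ne_zero (secondRatio_ne_zero hx n) (pow_ne_zero 2 (secondRatio_ne_zero hx (n + 1)))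
  rw [eq_div_iff hden]
  calc secondRatio x (n + 2) * (secondRatio x n * secondRatio x (n + 1) ^ 2)
      = x (n + 4) * x n / x (n + 2) ^ 2 := secondRatio_add_two_mul hx n
    _ = (α * (x (n + 3) * x (n + 1)) + β * x (n + 2) ^ 2) / x (n + 2) ^ 2 := by rw [hrec]
    _ = α * (x (n + 3) * x (n + 1) / x (n + 2) ^ 2) + β := by
      rw [add_div, mul_div_assoc, mul_div_cancel_right₀ β (pow_ne_zero 2 (hx (n + 2)))]
    _ = α * secondRatio x (n + 1) + β := rfl

/-- For a sequence of nonzero complex numbers satisfying the Somos-4 recurrence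
`x_{n+4} x_n = x_{n+3} x_{n+1} + x_{n+2}²`, the variables `y_n = x_{n+2} x_n / x_{n+1}²`
satisfy the QRT map `y_{n+2} = (y_{n+1} + 1)/(y_n y_{n+1}²)`. -/
theorem somos4_qrt_reduction (x : ℕ → ℂ) (hx : ∀ n, x n ≠ 0)
    (hrec : ∀ n, x (n + 4) * x n = x (n + 3) * x (n + 1) + x (n + 2) ^ 2)
    (y : ℕ → ℂ) (hy : ∀ n, y n = x (n + 2) * x n / x (n + 1) ^ 2) :
    ∀ n, y (n + 2) = (y (n + 1) + 1) / (y n * y (n + 1) ^ 2) := by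
  obtain rfl : y = secondRatio x := funext hy
  simpa only [one_mul] using somos4_qrt_reduction_general (α := 1) (β := 1) hx (by simpa using hrec)
end

section
/- Let a be a complex parameter and let (x_n) be a sequence of nonzero complex numbers satisfying x_{n+5} x_{n+2}^3 x_{n+1}^2 = x_{n+4}^3 x_{n+1}^3 − x_{n+4}^2 x_{n+3}^3 x_n + a x_{n+3}^6 x_{n+2}^6 for all n. Define u_n = x_{n+3} x_n / (x_{n+1} x_{n+2})^2, and assume u_{n+1} ≠ 0. Then u_{n+2} + u_n = u_{n+1} + a/u_{n+1}^2, i.e. (u_n) satisfies the Hietarinta–Viallet recurrence. -/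
/-!
Under the substitution, the two relations differ only by a monomial factor: moving everything to
one side, the Hietarinta–Viallet relation at `n` is the relation for `x` at `n` divided by
`(x_{n+1} x_{n+2} x_{n+3} x_{n+4})²`. For nonzero `x` the two are therefore equivalent.
-/

section TauSubstitution

variable {K : Type*} [Field K] (a x₀ : K) {x₁ x₂ x₃ x₄ : K} (x₅ : K)

theorem hietarintaViallet_defect_eq_div
    (h₁ : x₁ ≠ 0) (h₂ : x₂ ≠ 0) (h₃ : x₃ ≠ 0) (h₄ : x₄ ≠ 0) :
    x₅ * x₂ / (x₃ * x₄) ^ 2 + x₃ * x₀ / (x₁ * x₂) ^ 2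
        - (x₄ * x₁ / (x₂ * x₃) ^ 2 + a / (x₄ * x₁ / (x₂ * x₃) ^ 2) ^ 2)
      = (x₅ * x₂ ^ 3 * x₁ ^ 2
          - (x₄ ^ 3 * x₁ ^ 3 - x₄ ^ 2 * x₃ ^ 3 * x₀ + a * x₃ ^ 6 * x₂ ^ 6))
        / (x₁ * x₂ * x₃ * x₄) ^ 2 := by
  field_simp
  ring

theorem hietarintaViallet_iff_laurentification
    (h₁ : x₁ ≠ 0) (h₂ : x₂ ≠ 0) (h₃ : x₃ ≠ 0) (h₄ : x₄ ≠ 0) :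
    x₅ * x₂ / (x₃ * x₄) ^ 2 + x₃ * x₀ / (x₁ * x₂) ^ 2
        = x₄ * x₁ / (x₂ * x₃) ^ 2 + a / (x₄ * x₁ / (x₂ * x₃) ^ 2) ^ 2 ↔
      x₅ * x₂ ^ 3 * x₁ ^ 2
        = x₄ ^ 3 * x₁ ^ 3 - x₄ ^ 2 * x₃ ^ 3 * x₀ + a * x₃ ^ 6 * x₂ ^ 6 := by
  have denom_ne_zero : (x₁ * x₂ * x₃ * x₄) ^ 2 ≠ 0 :=
    pow_ne_zero 2 (mul_ne_zero (mul_ne_zero (mul_ne_zero h₁ h₂) h₃) h₄)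
  rw [← sub_eq_zero, hietarintaViallet_defect_eq_div a x₀ x₅ h₁ h₂ h₃ h₄,
    div_eq_zero_iff, or_iff_left denom_ne_zero, sub_eq_zero]

end TauSubstitution

theorem hietarinta_viallet_laurentification_general {K : Type*} [Field K] (a : K) (x : ℕ → K)
    (hx : ∀ n, x n ≠ 0) (u : ℕ → K)
    (hu : ∀ n, u n = x (n + 3) * x n / (x (n + 1) * x (n + 2)) ^ 2) (n : ℕ) :
    u (n + 2) + u n = u (n + 1) + a / u (n + 1) ^ 2 ↔
      x (n + 5) * x (n + 2) ^ 3 * x (n + 1) ^ 2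
        = x (n + 4) ^ 3 * x (n + 1) ^ 3 - x (n + 4) ^ 2 * x (n + 3) ^ 3 * x n
          + a * x (n + 3) ^ 6 * x (n + 2) ^ 6 := by
  rw [hu n, hu (n + 1), hu (n + 2)]
  exact hietarintaViallet_iff_laurentification a (x n) (x (n + 5))
    (hx (n + 1)) (hx (n + 2)) (hx (n + 3)) (hx (n + 4))

/-- Laurentification of the Hietarinta–Viallet map: if a sequence of nonzero complex numbers
satisfies `x_{n+5} x_{n+2}³ x_{n+1}² = x_{n+4}³ x_{n+1}³ − x_{n+4}² x_{n+3}³ x_n + a x_{n+3}⁶ x_{n+2}⁶`,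
then `u_n = x_{n+3} x_n / (x_{n+1} x_{n+2})²` satisfies `u_{n+2} + u_n = u_{n+1} + a/u_{n+1}²`. -/
theorem hietarinta_viallet_laurentification (a : ℂ) (x : ℕ → ℂ) (hx : ∀ n, x n ≠ 0)
    (hrec : ∀ n, x (n + 5) * x (n + 2) ^ 3 * x (n + 1) ^ 2
      = x (n + 4) ^ 3 * x (n + 1) ^ 3 - x (n + 4) ^ 2 * x (n + 3) ^ 3 * x n
        + a * x (n + 3) ^ 6 * x (n + 2) ^ 6)
    (u : ℕ → ℂ) (hu : ∀ n, u n = x (n + 3) * x n / (x (n + 1) * x (n + 2)) ^ 2)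
    (hune : ∀ n, u (n + 1) ≠ 0) :
    ∀ n, u (n + 2) + u n = u (n + 1) + a / u (n + 1) ^ 2 :=
  fun n => (hietarinta_viallet_laurentification_general a x hx u hu n).mpr (hrec n)
end

section
/- Fix an integer r ≥ 3 and define a real sequence by d_1 = −1, d_2 = 0, and d_{n+2} = max(r·d_{n+1}, 0) − d_n for n ≥ 1. Then d_n > 0 for all n ≥ 3, the sequence satisfies the linear recurrence d_{n+2} = r·d_{n+1} − d_n for all n ≥ 2, and d_n / λ^n converges as n → ∞ to a positive limit, where λ = (r + √(r^2 − 4))/2. -/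
open Filter

/-!
As long as `0 ≤ uₙ₊₁` the maximum in `uₙ₊₂ = max (r uₙ₊₁) 0 - uₙ` is `r uₙ₊₁`, and for `r ≥ 2` the
linear recurrence propagates both `0 ≤ uₙ₊₁` and `uₙ < uₙ₊₁`, so the sequence never leaves this
linear regime. There the characteristic roots are `λ` and `λ⁻¹`, and `uₙ / λⁿ` tends to the
coefficient of the dominant root, which is positive by the same two inequalities.
-/

section LinearRecurrence

variable {R : Type*} [CommRing R] {a b : R} {u : ℕ → R}

theorem succ_sub_mul_eq_mul_pow_of_linear_recurrence
    (hu : ∀ n, u (n + 2) = (a + b) * u (n + 1) - a * b * u n) (n : ℕ) :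
    u (n + 1) - b * u n = (u 1 - b * u 0) * a ^ n := by
  induction n with
  | zero => simp
  | succ n ih => linear_combination hu n + a * ih

theorem sub_mul_eq_of_linear_recurrence
    (hu : ∀ n, u (n + 2) = (a + b) * u (n + 1) - a * b * u n) (n : ℕ) :
    (a - b) * u n = (u 1 - b * u 0) * a ^ n - (u 1 - a * u 0) * b ^ n := by
  have hu_swap (n : ℕ) : u (n + 2) = (b + a) * u (n + 1) - b * a * u n := by
    rw [hu, add_comm a, mul_comm a b]
  linear_combination succ_sub_mul_eq_mul_pow_of_linear_recurrence hu n -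
    succ_sub_mul_eq_mul_pow_of_linear_recurrence hu_swap n

end LinearRecurrence

theorem tendsto_div_pow_of_linear_recurrence {𝕜 : Type*} [NormedField 𝕜] {a b : 𝕜} {u : ℕ → 𝕜}
    (hba : ‖b‖ < ‖a‖) (hu : ∀ n, u (n + 2) = (a + b) * u (n + 1) - a * b * u n) :
    Tendsto (fun n ↦ u n / a ^ n) atTop (nhds ((u 1 - b * u 0) / (a - b))) := by
  have ha : a ≠ 0 := norm_pos_iff.mp ((norm_nonneg b).trans_lt hba)
  have hab : a - b ≠ 0 := sub_ne_zero.mpr fun h ↦ hba.ne' (congrArg norm h)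
  have hratio : ‖b / a‖ < 1 := by
    rwa [norm_div, div_lt_one (norm_pos_iff.mpr ha)]
  have hlim : Tendsto (fun n ↦ (u 1 - b * u 0 - (u 1 - a * u 0) * (b / a) ^ n) / (a - b))
      atTop (nhds ((u 1 - b * u 0) / (a - b))) := by
    simpa only [mul_zero, sub_zero] using
      (((tendsto_pow_atTop_nhds_zero_of_norm_lt_one hratio).const_mul
        (u 1 - a * u 0)).const_sub (u 1 - b * u 0)).div_const (a - b)
  refine hlim.congr fun n ↦ ?_
  rw [div_eq_div_iff hab (pow_ne_zero n ha), div_pow, sub_mul, mul_assoc,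
    div_mul_cancel₀ _ (pow_ne_zero n ha), mul_comm (u n), sub_mul_eq_of_linear_recurrence hu n]

/-- Solutions of the tropical exchange relation of rank 2, that is, of the max-plus form of
`x_{n+2} x_n = x_{n+1}^r + 1` obeyed by each coordinate of the d-vectors. The index starts at `0`,
so the sequence `d₁, d₂, …` of the cluster algebra is `fun n ↦ d (n + 1)`. -/
def IsTropicalExchangeSeq {R : Type*} [Ring R] [LinearOrder R] (r : R) (u : ℕ → R) : Prop :=
  ∀ n, u (n + 2) = max (r * u (n + 1)) 0 - u n

namespace IsTropicalExchangeSeq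

variable {R : Type*} [CommRing R] [LinearOrder R] [IsStrictOrderedRing R] {r : R} {u : ℕ → R}

theorem add_two_eq_of_nonneg (hu : IsTropicalExchangeSeq r u) (hr : 0 ≤ r) {n : ℕ}
    (hn : 0 ≤ u (n + 1)) : u (n + 2) = r * u (n + 1) - u n := by
  rw [hu n, max_eq_left (mul_nonneg hr hn)]

theorem nonneg_and_lt_succ (hu : IsTropicalExchangeSeq r u) (hr : 2 ≤ r) (h1 : 0 ≤ u 1)
    (h01 : u 0 < u 1) (n : ℕ) : 0 ≤ u (n + 1) ∧ u n < u (n + 1) := by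
  induction n with
  | zero => exact ⟨h1, h01⟩
  | succ n ih =>
    obtain ⟨hnonneg, hlt⟩ := ih
    have hlinear := hu.add_two_eq_of_nonneg (zero_le_two.trans hr) hnonneg
    have hdouble : 2 * u (n + 1) ≤ r * u (n + 1) := mul_le_mul_of_nonneg_right hr hnonneg
    have hlt_next : u (n + 1) < u (n + 2) := by linarith
    exact ⟨hnonneg.trans hlt_next.le, hlt_next⟩

theorem add_two_eq (hu : IsTropicalExchangeSeq r u) (hr : 2 ≤ r) (h1 : 0 ≤ u 1)
    (h01 : u 0 < u 1) (n : ℕ) : u (n + 2) = r * u (n + 1) - u n :=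
  hu.add_two_eq_of_nonneg (zero_le_two.trans hr) (hu.nonneg_and_lt_succ hr h1 h01 n).1

theorem pos_add_two (hu : IsTropicalExchangeSeq r u) (hr : 2 ≤ r) (h1 : 0 ≤ u 1)
    (h01 : u 0 < u 1) (n : ℕ) : 0 < u (n + 2) :=
  (hu.nonneg_and_lt_succ hr h1 h01 n).1.trans_lt (hu.nonneg_and_lt_succ hr h1 h01 (n + 1)).2

end IsTropicalExchangeSeq

/-- The larger root `λ` of the characteristic polynomial `X² - r X + 1`, for `r ≥ 2`; its logarithm
is the algebraic entropy of the cluster recurrence. For `|r| < 2` the square root takes its junk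
value `0`. -/
noncomputable def growthRate (r : ℝ) : ℝ := (r + √(r ^ 2 - 4)) / 2

theorem one_lt_growthRate {r : ℝ} (hr : 2 < r) : 1 < growthRate r := by
  have hsqrt : 0 ≤ √(r ^ 2 - 4) := Real.sqrt_nonneg _
  unfold growthRate
  linarith

theorem growthRate_add_inv {r : ℝ} (hr : 2 ≤ r) : growthRate r + (growthRate r)⁻¹ = r := by
  have hsq : √(r ^ 2 - 4) ^ 2 = r ^ 2 - 4 := Real.sq_sqrt (by nlinarith)
  have hmul : growthRate r * (r - growthRate r) = 1 := by
    unfold growthRate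
    linear_combination -hsq / 4
  rw [inv_eq_of_mul_eq_one_right hmul, add_sub_cancel]

theorem tendsto_div_growthRate_pow {r : ℝ} {u : ℕ → ℝ} (hr : 2 < r)
    (hu : ∀ n, u (n + 2) = r * u (n + 1) - u n) :
    Tendsto (fun n ↦ u n / growthRate r ^ n) atTop
      (nhds ((u 1 - (growthRate r)⁻¹ * u 0) / (growthRate r - (growthRate r)⁻¹))) := by
  have hone := one_lt_growthRate hr
  have hpos : 0 < growthRate r := one_pos.trans hone
  refine tendsto_div_pow_of_linear_recurrence ?_ fun n ↦ ?_
  · rw [norm_inv, Real.norm_of_nonneg hpos.le]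
    exact (inv_lt_one_of_one_lt₀ hone).trans hone
  · rw [growthRate_add_inv hr.le, mul_inv_cancel₀ hpos.ne', one_mul, hu]

theorem IsTropicalExchangeSeq.exists_pos_tendsto_div_growthRate_pow {r : ℝ} {u : ℕ → ℝ}
    (hu : IsTropicalExchangeSeq r u) (hr : 2 < r) (h1 : 0 ≤ u 1) (h01 : u 0 < u 1) :
    ∃ L : ℝ, 0 < L ∧ Tendsto (fun n ↦ u n / growthRate r ^ n) atTop (nhds L) := by
  refine ⟨_, ?_, tendsto_div_growthRate_pow hr (hu.add_two_eq hr.le h1 h01)⟩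
  have hone := one_lt_growthRate hr
  have hinv_pos : 0 < (growthRate r)⁻¹ := inv_pos.mpr (one_pos.trans hone)
  have hinv_lt_one : (growthRate r)⁻¹ < 1 := inv_lt_one_of_one_lt₀ hone
  have hnum : (growthRate r)⁻¹ * u 0 < u 1 :=
    calc (growthRate r)⁻¹ * u 0 < (growthRate r)⁻¹ * u 1 := mul_lt_mul_of_pos_left h01 hinv_pos
      _ ≤ u 1 := mul_le_of_le_one_left h1 hinv_lt_one.le
  exact div_pos (sub_pos.mpr hnum) (sub_pos.mpr (hinv_lt_one.trans hone))

theorem dvector_growth_general {r : ℝ} (hr : 2 < r) {d : ℕ → ℝ} (h2 : 0 ≤ d 2) (h12 : d 1 < d 2)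
    (hrec : ∀ n, 1 ≤ n → d (n + 2) = max (r * d (n + 1)) 0 - d n) :
    (∀ n, 3 ≤ n → 0 < d n) ∧
      (∀ n, 1 ≤ n → d (n + 2) = r * d (n + 1) - d n) ∧
      ∃ L : ℝ, 0 < L ∧ Tendsto (fun n ↦ d n / growthRate r ^ n) atTop (nhds L) := by
  have hu : IsTropicalExchangeSeq r fun n ↦ d (n + 1) := fun n ↦ hrec (n + 1) n.succ_pos
  refine ⟨fun n hn ↦ ?_, fun n hn ↦ ?_, ?_⟩
  · obtain ⟨k, rfl⟩ := Nat.exists_eq_add_of_le' hn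
    exact hu.pos_add_two hr.le h2 h12 k
  · obtain ⟨k, rfl⟩ := Nat.exists_eq_add_of_le' hn
    exact hu.add_two_eq hr.le h2 h12 k
  · obtain ⟨L, hL, hlim⟩ := hu.exists_pos_tendsto_div_growthRate_pow hr h2 h12
    have hpos : 0 < growthRate r := one_pos.trans (one_lt_growthRate hr)
    refine ⟨L / growthRate r, div_pos hL hpos, (tendsto_add_atTop_iff_nat 1).mp ?_⟩
    simpa only [div_div, ← pow_succ] using hlim.div_const (growthRate r)

/-- The tropical d-vector dynamics of the rank-2 cluster recurrence `x_{n+2} x_n = x_{n+1}^r + 1`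
for `r ≥ 3`: with `d₁ = −1`, `d₂ = 0` and `d_{n+2} = max(r d_{n+1}, 0) − d_n` for `n ≥ 1`,
one has `d_n > 0` for `n ≥ 3`, the linear recurrence `d_{n+2} = r d_{n+1} − d_n` holds for
`n ≥ 2`, and `d_n / λⁿ` converges to a positive limit, where `λ = (r + √(r²−4))/2`. -/
theorem dvector_growth (r : ℕ) (hr : 3 ≤ r) (d : ℕ → ℝ)
    (h1 : d 1 = -1) (h2 : d 2 = 0)
    (hrec : ∀ n, 1 ≤ n → d (n + 2) = max ((r : ℝ) * d (n + 1)) 0 - d n) :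
    (∀ n, 3 ≤ n → 0 < d n) ∧
      (∀ n, 2 ≤ n → d (n + 2) = (r : ℝ) * d (n + 1) - d n) ∧
      ∃ L : ℝ, 0 < L ∧
        Tendsto (fun n : ℕ => d n / (((r : ℝ) + Real.sqrt ((r : ℝ) ^ 2 - 4)) / 2) ^ n)
          atTop (nhds L) := by
  obtain ⟨hpos, hlinear, hlim⟩ :=
    dvector_growth_general (mod_cast hr) h2.ge (by rw [h1, h2]; exact neg_one_lt_zero) hrec
  exact ⟨hpos, fun n hn ↦ hlinear n (one_le_two.trans hn), hlim⟩
end
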